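/- Let n ≥ 3 and let K ⊆ ℝⁿ be a closed convex set with nonempty interior, K ≠ ℝⁿ, that is strictly convex and regular. Let δ : S^{n−1} → ℝ be continuous, H(u) = {x ∈ ℝⁿ : ⟨x, u⟩ = δ(u)}, and assume that for every u ∈ S^{n−1} the set frontier K ∩ H(u) is an (n−1)-dimensional convex quadric in H(u). Then frontier K contains an open piece of a quadric surface: there exist a real quadric surface Q ⊆ ℝⁿ and a nonempty set A ⊆ frontier K ∩ Q that is open in the subspace topology of frontier K. -/

import Mathlib

open Set Metric RealInnerProductSpace

noncomputable section

/-- Euclidean n-space. -/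
abbrev En (n : ℕ) := EuclideanSpace ℝ (Fin n)

/-- A quadric surface in ℝⁿ: the zero set of a quadratic polynomial whose quadratic
part (given by a symmetric matrix) is not identically zero. -/
def IsQuadricSurface {n : ℕ} (Q : Set (En n)) : Prop :=
  ∃ (a : Matrix (Fin n) (Fin n) ℝ) (b : Fin n → ℝ) (c : ℝ),
    a.IsSymm ∧ a ≠ 0 ∧
    Q = {x : En n | (∑ i, ∑ k, a i k * x i * x k) + 2 * (∑ i, b i * x i) + c = 0}

/-- A real quadric surface: a nonempty quadric surface. -/
def IsRealQuadricSurface {n : ℕ} (Q : Set (En n)) : Prop :=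
  IsQuadricSurface Q ∧ Q.Nonempty

/-- The set of connected components of a subset `F` of a topological space. -/
def componentsIn {α : Type*} [TopologicalSpace α] (F : Set α) : Set (Set α) :=
  {C | ∃ x ∈ F, C = connectedComponentIn F x}

/-- A convex quadric: the frontier of a convex connected component of the complement
of a real quadric surface. -/
def IsConvexQuadric {n : ℕ} (S : Set (En n)) : Prop :=
  ∃ Q U : Set (En n), IsRealQuadricSurface Q ∧ U ∈ componentsIn Qᶜ ∧
    Convex ℝ U ∧ S = frontier U
/-- `S` is an (n−1)-dimensional convex quadric in the hyperplane `H ⊆ ℝⁿ`: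
for some affine isometry φ : ℝ^{n−1} → ℝⁿ with image `H`, the set φ⁻¹(S) is a
convex quadric in ℝ^{n−1}. -/
def IsConvexQuadricIn {n : ℕ} (H S : Set (En n)) : Prop :=
  S ⊆ H ∧ ∃ φ : En (n - 1) →ᵃⁱ[ℝ] En n,
    Set.range (φ : En (n - 1) → En n) = H ∧ IsConvexQuadric ((φ : En (n - 1) → En n) ⁻¹' S)

/-- The hyperplane H(u) = {x : ⟨x, u⟩ = δ(u)} associated to a unit vector u. -/
def sphHyp {n : ℕ} (δ : sphere (0 : En n) 1 → ℝ) (u : sphere (0 : En n) 1) : Set (En n) :=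
  {x : En n | ⟪x, (u : En n)⟫ = δ u}
/-- `G` is a supporting hyperplane of `K` at the point `x`. -/
def IsSupportHyperplaneAt {n : ℕ} (K : Set (En n)) (x : En n) (G : Set (En n)) : Prop :=
  (∃ (v : En n) (c : ℝ), v ≠ 0 ∧ G = {y : En n | ⟪y, v⟫ = c}) ∧
    x ∈ G ∧ (G ∩ K).Nonempty ∧ G ∩ interior K = ∅

/-- `K` is strictly convex: its frontier contains no segment with distinct endpoints. -/
def IsStrictlyConvexSet {n : ℕ} (K : Set (En n)) : Prop :=
  ∀ x ∈ frontier K, ∀ y ∈ frontier K, x ≠ y → ¬ segment ℝ x y ⊆ frontier K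

/-- `K` is regular: every frontier point lies on exactly one supporting hyperplane. -/
def IsRegularSet {n : ℕ} (K : Set (En n)) : Prop :=
  ∀ x ∈ frontier K, ∃! G : Set (En n), IsSupportHyperplaneAt K x G


section helpers

variable {E : Type*} [NormedAddCommGroup E] [InnerProductSpace ℝ E]

/-- Quadratic functions (degree at most two). -/
def Quad (f : E → ℝ) : Prop :=
  ∃ (B : E →ₗ[ℝ] E →ₗ[ℝ] ℝ) (l : E →ₗ[ℝ] ℝ) (c : ℝ), ∀ x, f x = B x x + l x + c

/-- Hyperplanes. -/
def Hy (u : E) (c : ℝ) : Set E := {x | ⟪x, u⟫ = c}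

/-- `q` cuts out `K` in `H`. -/
def GoodQ (K H : Set E) (q : E → ℝ) : Prop :=
  Quad q ∧ (∀ x ∈ H, x ∈ frontier K → q x = 0) ∧ (∀ x ∈ H, x ∈ interior K → q x < 0)

/-- The linear functional `x ↦ ⟪x, u⟫`. -/
def ip (u : E) : E →ₗ[ℝ] ℝ := (innerₗ E).flip u

lemma ip_apply (u x : E) : ip u x = ⟪x, u⟫ := by simp [ip, real_inner_comm]

lemma Quad.at {q : E → ℝ} (hq : Quad q) (z : E) :
    ∃ (d : E →ₗ[ℝ] ℝ) (B : E →ₗ[ℝ] E →ₗ[ℝ] ℝ), ∀ (w : E) (t : ℝ),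
      q (z + t • w) = q z + t * d w + t ^ 2 * B w w := by
  obtain ⟨B, l, c, h⟩ := hq
  refine ⟨B.flip z + B z + l, B, fun w t => ?_⟩
  rw [h, h]
  simp
  ring

lemma Quad.add {p q : E → ℝ} (hp : Quad p) (hq : Quad q) : Quad (fun x => p x + q x) := by
  obtain ⟨B, l, c, h⟩ := hp
  obtain ⟨B', l', c', h'⟩ := hq
  refine ⟨B + B', l + l', c + c', fun x => ?_⟩
  simp only [h, h', LinearMap.add_apply]
  ring

lemma Quad.smul {p : E → ℝ} (hp : Quad p) (r : ℝ) : Quad (fun x => r * p x) := by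
  obtain ⟨B, l, c, h⟩ := hp
  refine ⟨r • B, r • l, r * c, fun x => ?_⟩
  simp only [h, LinearMap.smul_apply, smul_eq_mul]
  ring

lemma Quad.sub {p q : E → ℝ} (hp : Quad p) (hq : Quad q) : Quad (fun x => p x - q x) := by
  have := hp.add (hq.smul (-1))
  convert this using 2
  ring

lemma Quad.mul_affine (l m : E →ₗ[ℝ] ℝ) (c e : ℝ) : Quad (fun x => (l x + c) * (m x + e)) := by
  refine ⟨LinearMap.mk₂ ℝ (fun x y => l x * m y) ?_ ?_ ?_ ?_, e • l + c • m, c * e, fun x => ?_⟩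
  · intros; simp; ring
  · intros; simp; ring
  · intros; simp; ring
  · intros; simp; ring
  · simp; ring

lemma Quad.hy_mul {u : E} {c : ℝ} (m : E →ₗ[ℝ] ℝ) (e : ℝ) :
    Quad (fun x => (⟪x, u⟫ - c) * (m x + e)) := by
  have := Quad.mul_affine (ip u) m (-c) e
  simpa [ip_apply, sub_eq_add_neg] using this

lemma Quad.comp {F : Type*} [NormedAddCommGroup F] [InnerProductSpace ℝ F] {q : F → ℝ}
    (hq : Quad q) (L : E →ₗ[ℝ] F) (a : F) : Quad (fun x => q (L x + a)) := by
  obtain ⟨B, l, c, h⟩ := hq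
  refine ⟨B.compl₁₂ L L, (B.flip a) ∘ₗ L + (B a) ∘ₗ L + l ∘ₗ L, B a a + l a + c, fun x => ?_⟩
  simp only [h]
  simp
  ring

lemma GoodQ.smul {K H : Set E} {q : E → ℝ} (h : GoodQ K H q) {r : ℝ} (hr : 0 < r) :
    GoodQ K H (fun x => r * q x) := by
  refine ⟨h.1.smul r, fun x hx hx' => ?_, fun x hx hx' => ?_⟩
  · simp [h.2.1 x hx hx']
  · exact mul_neg_of_pos_of_neg hr (h.2.2 x hx hx')

lemma GoodQ.congr {K H : Set E} {p q : E → ℝ} (h : GoodQ K H q) (hp : Quad p)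
    (e : ∀ x ∈ H, p x = q x) : GoodQ K H p :=
  ⟨hp, fun x hx hx' => by rw [e x hx, h.2.1 x hx hx'],
    fun x hx hx' => by rw [e x hx]; exact h.2.2 x hx hx'⟩

lemma preconn_frontier {X : Type*} [TopologicalSpace X] {s K : Set X} (hs : IsPreconnected s)
    (h1 : (s ∩ K).Nonempty) (h2 : (s \ K).Nonempty) : (s ∩ frontier K).Nonempty := by
  by_contra hcon
  rw [not_nonempty_iff_eq_empty] at hcon
  have hn : ∀ x ∈ s, x ∉ frontier K := fun x hx hx' => by
    have : x ∈ s ∩ frontier K := ⟨hx, hx'⟩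
    rw [hcon] at this
    exact this
  obtain ⟨x, hx, hxK⟩ := h1
  obtain ⟨x', hx', hxK'⟩ := h2
  have key : ∀ x ∈ s, x ∈ interior K ∨ x ∈ (closure K)ᶜ := by
    intro x hx
    by_cases h : x ∈ closure K
    · left
      by_contra h'
      exact hn x hx ⟨h, h'⟩
    · right; exact h
  obtain ⟨w, -, hw1, hw2⟩ := hs _ _ isOpen_interior isClosed_closure.isOpen_compl key
    ⟨x, hx, (key x hx).resolve_right (fun h => h (subset_closure hxK))⟩
    ⟨x', hx', (key x' hx').resolve_left (fun h => hxK' (interior_subset h))⟩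
  exact hw2 (subset_closure (interior_subset hw1))

/-- A ray from a point of `K` leaves a set `K` if it is bounded along that ray. -/
lemma exit_ray {K : Set E} {y d : E} (hy : y ∈ interior K) (hd : d ≠ 0)
    (hb : Bornology.IsBounded (K ∩ {x | ∃ t : ℝ, x = y + t • d})) :
    ∃ b : ℝ, 0 < b ∧ y + b • d ∈ frontier K := by
  have hpre : IsPreconnected ((fun t : ℝ => y + t • d) '' Ici 0) :=
    (isPreconnected_Ici).image _ (by fun_prop)
  have h1 : (((fun t : ℝ => y + t • d) '' Ici 0) ∩ K).Nonempty :=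
    ⟨y, ⟨0, by simp, by simp⟩, interior_subset hy⟩
  have h2 : (((fun t : ℝ => y + t • d) '' Ici 0) \ K).Nonempty := by
    obtain ⟨R, hR⟩ := hb.subset_closedBall y
    have hdn : 0 < ‖d‖ := norm_pos_iff.mpr hd
    refine ⟨y + ((|R| + 1) / ‖d‖) • d, ⟨_, ?_, rfl⟩, fun hK => ?_⟩
    · simp only [mem_Ici]; positivity
    · have := hR ⟨hK, _, rfl⟩
      rw [mem_closedBall, dist_eq_norm, add_sub_cancel_left, norm_smul, Real.norm_eq_abs,
        abs_of_nonneg (by positivity), div_mul_cancel₀ _ hdn.ne'] at this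
      linarith [le_abs_self R]
  obtain ⟨x, ⟨t, ht, rfl⟩, hx⟩ := preconn_frontier hpre h1 h2
  refine ⟨t, lt_of_le_of_ne ht ?_, hx⟩
  rintro rfl
  simp only [zero_smul, add_zero] at hx
  exact hx.2 hy

lemma exit_line {K : Set E} {y d : E} (hy : y ∈ interior K) (hd : d ≠ 0)
    (hb : Bornology.IsBounded (K ∩ {x | ∃ t : ℝ, x = y + t • d})) :
    ∃ a b : ℝ, a < 0 ∧ 0 < b ∧ y + a • d ∈ frontier K ∧ y + b • d ∈ frontier K := by
  obtain ⟨b, hb0, hb1⟩ := exit_ray hy hd hb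
  obtain ⟨a, ha0, ha1⟩ := exit_ray (d := -d) hy (by simpa using hd) (by
    refine hb.subset ?_
    rintro x ⟨hx, t, rfl⟩
    exact ⟨hx, -t, by simp⟩)
  exact ⟨-a, b, by linarith, hb0, by simpa using ha1, hb1⟩

lemma exit_hy {K : Set E} {u : E} {c : ℝ} (hb : Bornology.IsBounded (K ∩ Hy u c)) {y d : E}
    (hy : y ∈ interior K) (hyu : y ∈ Hy u c) (hd : d ≠ 0) (hdu : ⟪d, u⟫ = 0) :
    ∃ a b : ℝ, a < 0 ∧ 0 < b ∧ y + a • d ∈ frontier K ∧ y + b • d ∈ frontier K := by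
  refine exit_line hy hd (hb.subset ?_)
  rintro x ⟨hx, t, rfl⟩
  refine ⟨hx, ?_⟩
  simp only [Hy, mem_ofPred_eq, inner_add_left, inner_smul_left] at *
  simp [hyu, hdu]

lemma hy_line {u : E} {c : ℝ} {y d : E} (hyu : y ∈ Hy u c) (hdu : ⟪d, u⟫ = 0) (t : ℝ) :
    y + t • d ∈ Hy u c := by
  simp only [Hy, mem_ofPred_eq, inner_add_left, inner_smul_left] at *
  simp [hyu, hdu]

lemma hy_sub {u : E} {c : ℝ} {x y : E} (hx : x ∈ Hy u c) (hy : y ∈ Hy u c) :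
    ⟪x - y, u⟫ = 0 := by
  simp only [Hy, mem_ofPred_eq] at *
  rw [inner_sub_left, hx, hy, sub_self]

/-- a quadratic polynomial in one variable with roots a<0<b. -/
lemma quad_three {α β γ a b : ℝ} (ha : a < 0) (hb : 0 < b)
    (h1 : γ + a * β + a ^ 2 * α = 0) (h2 : γ + b * β + b ^ 2 * α = 0) :
    β = - α * (a + b) ∧ γ = α * a * b := by
  have hab : a - b ≠ 0 := by linarith
  have h3 : (a - b) * (β + α * (a + b)) = 0 := by linear_combination h1 - h2
  have h4 : β + α * (a + b) = 0 := (mul_eq_zero.mp h3).resolve_left hab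
  refine ⟨by linear_combination h4, by linear_combination h1 - a * h4⟩

/-- Points of `H` where `q` vanishes / is negative. -/
lemma GoodQ.sign {K : Set E} (hK : Convex ℝ K) (hKc : IsClosed K) {u : E} {c : ℝ} {q : E → ℝ}
    (h : GoodQ K (Hy u c) q) (hb : Bornology.IsBounded (K ∩ Hy u c)) {y x : E}
    (hy : y ∈ interior K) (hyu : y ∈ Hy u c) (hxu : x ∈ Hy u c) :
    (q x = 0 → x ∈ frontier K) ∧ (q x < 0 → x ∈ interior K) := by
  by_cases hxy : x = y
  · subst hxy
    exact ⟨fun h0 => absurd (h.2.2 x hyu hy) (by rw [h0]; exact lt_irrefl _), fun _ => hy⟩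
  have hd : x - y ≠ 0 := sub_ne_zero.mpr hxy
  have hdu := hy_sub hxu hyu
  obtain ⟨a, b, ha, hb0, hac, hbc⟩ := exit_hy hb hy hyu hd hdu
  obtain ⟨d, B, hdB⟩ := h.1.at y
  have e1 := h.2.1 _ (hy_line hyu hdu a) hac
  have e2 := h.2.1 _ (hy_line hyu hdu b) hbc
  have e0 := h.2.2 _ hyu hy
  rw [hdB] at e1 e2
  obtain ⟨f1, f2⟩ := quad_three ha hb0 e1 e2
  have ex := hdB (x - y) 1
  rw [one_smul, add_sub_cancel] at ex
  set α := B (x - y) (x - y)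
  have hα : 0 < α := by
    by_contra hcon
    push Not at hcon
    have : 0 ≤ α * a * b := mul_nonneg (mul_nonneg_of_nonpos_of_nonpos hcon ha.le) hb0.le
    linarith
  have ex' : q x = α * ((1 - a) * (1 - b)) := by rw [ex, f1, f2]; ring
  constructor
  · intro h0
    rw [ex'] at h0
    have hb1 : b = 1 := by
      rcases mul_eq_zero.mp h0 with h | h
      · linarith
      · rcases mul_eq_zero.mp h with h | h <;> linarith
    rw [hb1, one_smul, add_sub_cancel] at hbc
    exact hbc
  · intro h0
    rw [ex'] at h0
    have hb1 : 1 < b := by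
      by_contra hcon
      push Not at hcon
      have : 0 ≤ α * ((1 - a) * (1 - b)) :=
        mul_nonneg hα.le (mul_nonneg (by linarith) (by linarith))
      linarith
    have hbK : y + b • (x - y) ∈ closure K := frontier_subset_closure hbc
    refine hK.openSegment_interior_closure_subset_interior hy hbK ?_
    refine ⟨1 - 1 / b, 1 / b, ?_, by positivity, by ring, ?_⟩
    · have : 1 / b < 1 := by rw [div_lt_one hb0]; exact hb1
      linarith
    · rw [smul_add, smul_smul, one_div, inv_mul_cancel₀ hb0.ne', sub_smul]
      simp only [one_smul]
      abel

/-- Two good functions are proportional on the intersection. -/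
lemma ratio {K : Set E} {u v : E} {c e : ℝ} {p q : E → ℝ}
    (hp : GoodQ K (Hy u c) p) (hq : GoodQ K (Hy v e) q)
    (hb : Bornology.IsBounded (K ∩ Hy u c)) {y : E}
    (hy : y ∈ interior K) (hyu : y ∈ Hy u c) (hyv : y ∈ Hy v e) :
    ∃ r : ℝ, 0 < r ∧ ∀ x ∈ Hy u c, x ∈ Hy v e → p x = r * q x := by
  have hp0 := hp.2.2 y hyu hy
  have hq0 := hq.2.2 y hyv hy
  refine ⟨p y / q y, div_pos_of_neg_of_neg hp0 hq0, fun x hxu hxv => ?_⟩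
  by_cases hxy : x = y
  · subst hxy; rw [div_mul_cancel₀ _ hq0.ne]
  have hd : x - y ≠ 0 := sub_ne_zero.mpr hxy
  have hdu := hy_sub hxu hyu
  have hdv := hy_sub hxv hyv
  obtain ⟨a, b, ha, hb0, hac, hbc⟩ := exit_hy hb hy hyu hd hdu
  obtain ⟨d, B, hdB⟩ := (hp.1.sub (hq.1.smul (p y / q y))).at y
  have e1 := hdB (x - y) a
  have e2 := hdB (x - y) b
  have e3 := hdB (x - y) 1
  simp only [one_smul, add_sub_cancel] at e3
  have hz : p y - p y / q y * q y = 0 := by rw [div_mul_cancel₀ _ hq0.ne, sub_self]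
  simp only [hp.2.1 _ (hy_line hyu hdu a) hac, hq.2.1 _ (hy_line hyv hdv a) hac,
    hp.2.1 _ (hy_line hyu hdu b) hbc, hq.2.1 _ (hy_line hyv hdv b) hbc, hz, mul_zero,
    sub_zero] at e1 e2 e3
  obtain ⟨f1, f2⟩ := quad_three ha hb0 e1.symm e2.symm
  have hα : B (x - y) (x - y) = 0 := by
    rcases mul_eq_zero.mp f2.symm with h | h
    · rcases mul_eq_zero.mp h with h | h
      · exact h
      · linarith
    · linarith
  rw [hα] at f1 e3
  rw [f1] at e3
  linarith

/-- Supporting normals at all frontier points. -/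
def Supp (K : Set E) : Prop :=
  ∀ z ∈ frontier K, ∃ v : E, ∀ y ∈ interior K, ⟪y - z, v⟫ ≠ 0

lemma dir_zero {K : Set E} (hK : Convex ℝ K) (hKc : IsClosed K) {u : E} {c : ℝ} {q : E → ℝ}
    (h : GoodQ K (Hy u c) q) (hb : Bornology.IsBounded (K ∩ Hy u c)) {y z v : E}
    (hy : y ∈ interior K) (hyu : y ∈ Hy u c) (hz : z ∈ frontier K) (hzu : z ∈ Hy u c)
    (hv : ∀ y ∈ interior K, ⟪y - z, v⟫ ≠ 0)
    {d : E →ₗ[ℝ] ℝ} {B : E →ₗ[ℝ] E →ₗ[ℝ] ℝ}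
    (hdB : ∀ (w : E) (t : ℝ), q (z + t • w) = q z + t * d w + t ^ 2 * B w w)
    {w : E} (hwu : ⟪w, u⟫ = 0) (hwv : ⟪w, v⟫ = 0) : d w = 0 := by
  by_contra hne
  set b := B w w with hbdef
  set s : ℝ := 1 / (1 + |b|) with hs
  have hs0 : 0 < s := by positivity
  have hsb : s * b < 1 := by
    rw [hs, one_div, inv_mul_eq_div, div_lt_one (by positivity)]
    linarith [le_abs_self b]
  have hq : q (z + (-s * d w) • w) < 0 := by
    rw [hdB, h.2.1 z hzu hz]
    have h1 : 0 < s * (d w) ^ 2 := by positivity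
    have h2 : 0 < s * (d w) ^ 2 * (1 - s * b) := mul_pos h1 (by linarith)
    nlinarith
  have hi := (h.sign hK hKc hb hy hyu (hy_line hzu hwu (-s * d w))).2 hq
  apply hv _ hi
  rw [add_sub_cancel_left, inner_smul_left, hwv, mul_zero]

lemma dir_ne {K : Set E} {u : E} {c : ℝ} {q : E → ℝ}
    (h : GoodQ K (Hy u c) q) (hb : Bornology.IsBounded (K ∩ Hy u c)) {y z : E}
    (hy : y ∈ interior K) (hyu : y ∈ Hy u c) (hz : z ∈ frontier K) (hzu : z ∈ Hy u c)
    {d : E →ₗ[ℝ] ℝ} {B : E →ₗ[ℝ] E →ₗ[ℝ] ℝ}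
    (hdB : ∀ (w : E) (t : ℝ), q (z + t • w) = q z + t * d w + t ^ 2 * B w w) :
    d (y - z) ≠ 0 := by
  intro h0
  have hzy : z - y ≠ 0 := by
    intro h
    rw [sub_eq_zero] at h
    subst h
    exact hz.2 hy
  have hdu := hy_sub hzu hyu
  obtain ⟨a, b, ha, hb0, hac, hbc⟩ := exit_hy hb hy hyu hzy hdu
  have e1 := h.2.1 _ (hy_line hyu hdu a) hac
  have : y + a • (z - y) = z + (1 - a) • (y - z) := by
    module
  rw [this, hdB, h0, h.2.1 z hzu hz] at e1
  have hB : B (y - z) (y - z) = 0 := by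
    have h1 : (1 - a) ^ 2 * B (y - z) (y - z) = 0 := by linarith
    refine (mul_eq_zero.mp h1).resolve_left ?_
    have : 0 < 1 - a := by linarith
    positivity
  have e2 := hdB (y - z) 1
  rw [h0, hB, h.2.1 z hzu hz, one_smul, add_sub_cancel] at e2
  have := h.2.2 y hyu hy
  linarith

lemma dir_eq_of_eq {p q : E → ℝ} {z w : E}
    {d : E →ₗ[ℝ] ℝ} {B : E →ₗ[ℝ] E →ₗ[ℝ] ℝ} {d' : E →ₗ[ℝ] ℝ} {B' : E →ₗ[ℝ] E →ₗ[ℝ] ℝ}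
    (hdB : ∀ (w : E) (t : ℝ), p (z + t • w) = p z + t * d w + t ^ 2 * B w w)
    (hdB' : ∀ (w : E) (t : ℝ), q (z + t • w) = q z + t * d' w + t ^ 2 * B' w w) (r : ℝ)
    (h : ∀ t : ℝ, p (z + t • w) = r * q (z + t • w)) : d w = r * d' w := by
  have h1 := h 1
  have h2 := h (-1)
  have h0 := h 0
  rw [hdB, hdB'] at h1 h2 h0
  linarith

lemma coher {K : Set E} (hK : Convex ℝ K) (hKc : IsClosed K) (hS : Supp K)
    {u1 u2 u3 : E} {c1 c2 c3 : ℝ} {q1 q2 q3 : E → ℝ}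
    (h1 : GoodQ K (Hy u1 c1) q1) (h2 : GoodQ K (Hy u2 c2) q2) (h3 : GoodQ K (Hy u3 c3) q3)
    (b1 : Bornology.IsBounded (K ∩ Hy u1 c1)) (b2 : Bornology.IsBounded (K ∩ Hy u2 c2))
    (b3 : Bornology.IsBounded (K ∩ Hy u3 c3))
    (y12 : ∃ y ∈ interior K, y ∈ Hy u1 c1 ∧ y ∈ Hy u2 c2)
    (y13 : ∃ y ∈ interior K, y ∈ Hy u1 c1 ∧ y ∈ Hy u3 c3)
    (y23 : ∃ y ∈ interior K, y ∈ Hy u2 c2 ∧ y ∈ Hy u3 c3)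
    (hz : ∃ z, z ∈ Hy u1 c1 ∧ z ∈ Hy u2 c2 ∧ z ∈ Hy u3 c3)
    (e12 : ∀ x ∈ Hy u1 c1, x ∈ Hy u2 c2 → q1 x = q2 x)
    (e13 : ∀ x ∈ Hy u1 c1, x ∈ Hy u3 c3 → q1 x = q3 x) :
    ∀ x ∈ Hy u2 c2, x ∈ Hy u3 c3 → q2 x = q3 x := by
  obtain ⟨y12, i12, y121, y122⟩ := y12
  obtain ⟨y13, i13, y131, y133⟩ := y13
  obtain ⟨y23, i23, y232, y233⟩ := y23
  obtain ⟨z, z1, z2, z3⟩ := hz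
  obtain ⟨r, hr, hr'⟩ := ratio h2 h3 b2 i23 y232 y233
  suffices r = 1 by
    intro x hx hx'
    rw [hr' x hx hx', this, one_mul]
  by_cases hzf : z ∈ frontier K
  · obtain ⟨v, hv⟩ := hS z hzf
    obtain ⟨d1, B1, D1⟩ := h1.1.at z
    obtain ⟨d2, B2, D2⟩ := h2.1.at z
    obtain ⟨d3, B3, D3⟩ := h3.1.at z
    have n12 := hv _ i12
    have n13 := hv _ i13
    have n23 := hv _ i23
    have s1 := hy_sub y121 z1
    have s2 := hy_sub y122 z2
    have s3 := hy_sub y131 z1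
    have s4 := hy_sub y133 z3
    have s5 := hy_sub y232 z2
    have s6 := hy_sub y233 z3
    have k1 := dir_ne h2 b2 i23 y232 hzf z2 D2
    have k2 := dir_eq_of_eq (w := y12 - z) D1 D2 1
      (fun t => by rw [one_mul]; exact e12 _ (hy_line z1 s1 t) (hy_line z2 s2 t))
    have k3 := dir_eq_of_eq (w := y13 - z) D1 D3 1
      (fun t => by rw [one_mul]; exact e13 _ (hy_line z1 s3 t) (hy_line z3 s4 t))
    have k4 := dir_eq_of_eq (w := y23 - z) D2 D3 r
      (fun t => hr' _ (hy_line z2 s5 t) (hy_line z3 s6 t))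
    generalize y12 - z = w12 at *
    generalize y13 - z = w13 at *
    generalize y23 - z = w23 at *
    have m1 := dir_zero hK hKc h1 b1 i12 y121 hzf z1 hv D1
      (w := ⟪w13, v⟫ • w12 - ⟪w12, v⟫ • w13)
      (by simp [inner_sub_left, inner_smul_left, s1, s3])
      (by simp [inner_sub_left, inner_smul_left]; ring)
    have m2 := dir_zero hK hKc h2 b2 i12 y122 hzf z2 hv D2
      (w := ⟪w23, v⟫ • w12 - ⟪w12, v⟫ • w23)
      (by simp [inner_sub_left, inner_smul_left, s2, s5])
      (by simp [inner_sub_left, inner_smul_left]; ring)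
    have m3 := dir_zero hK hKc h3 b3 i13 y133 hzf z3 hv D3
      (w := ⟪w23, v⟫ • w13 - ⟪w13, v⟫ • w23)
      (by simp [inner_sub_left, inner_smul_left, s4, s6])
      (by simp [inner_sub_left, inner_smul_left]; ring)
    simp only [map_sub, map_smul, smul_eq_mul] at m1 m2 m3
    generalize ⟪w12, v⟫ = a at *
    generalize ⟪w13, v⟫ = b at *
    generalize ⟪w23, v⟫ = c at *
    have hk3 : d3 w23 ≠ 0 := by
      intro h; rw [h, mul_zero] at k4; exact k1 k4
    have : a * b * (d3 w23 * (r - 1)) = 0 := by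
      rw [one_mul] at k2 k3
      linear_combination (-a * b) * k4 + a * m3 - b * m2 - b * c * k2 + a * c * k3 + c * m1
    have h5 : d3 w23 * (r - 1) = 0 :=
      (mul_eq_zero.mp this).resolve_left (mul_ne_zero n12 n13)
    have := (mul_eq_zero.mp h5).resolve_left hk3
    linarith
  · have hne : q3 z ≠ 0 := fun h => hzf ((h3.sign hK hKc b3 i13 y133 z3).1 h)
    have := hr' z z2 z3
    rw [← e12 z z1 z2, e13 z z1 z3] at this
    have h6 : q3 z * (r - 1) = 0 := by linarith
    have := (mul_eq_zero.mp h6).resolve_left hne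
    linarith

/-- Three vectors with a dual family. -/
def Ind3 (a b c : E) : Prop :=
  ∃ x y z : E, (⟪x, a⟫ = 1 ∧ ⟪x, b⟫ = 0 ∧ ⟪x, c⟫ = 0) ∧ (⟪y, a⟫ = 0 ∧ ⟪y, b⟫ = 1 ∧ ⟪y, c⟫ = 0) ∧
    (⟪z, a⟫ = 0 ∧ ⟪z, b⟫ = 0 ∧ ⟪z, c⟫ = 1)

lemma Ind3.exists_mem {a b c : E} (h : Ind3 a b c) (r s t : ℝ) :
    ∃ z, z ∈ Hy a r ∧ z ∈ Hy b s ∧ z ∈ Hy c t := by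
  obtain ⟨x, y, z, ⟨h1, h2, h3⟩, ⟨h4, h5, h6⟩, h7, h8, h9⟩ := h
  refine ⟨r • x + s • y + t • z, ?_, ?_, ?_⟩ <;>
    simp [Hy, inner_add_left, inner_smul_left, *]

lemma factor1 {g : E → ℝ} (hg : Quad g) {u1 u2 w : E} {c1 c2 : ℝ} (hw1 : ⟪w, u1⟫ = 1)
    (hw2 : ⟪w, u2⟫ = 0) (h0 : ∀ x ∈ Hy u1 c1, x ∈ Hy u2 c2 → g x = 0) :
    ∃ (l : E →ₗ[ℝ] ℝ) (e : ℝ), ∀ x ∈ Hy u2 c2, g x = (⟪x, u1⟫ - c1) * (l x + e) := by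
  obtain ⟨B, l, c, h⟩ := hg
  refine ⟨B.flip w + B w - (B w w) • ip u1, c1 * B w w + l w, fun x hx => ?_⟩
  have h2 : x + (c1 - ⟪x, u1⟫) • w ∈ Hy u2 c2 := hy_line hx hw2 _
  have h1 : x + (c1 - ⟪x, u1⟫) • w ∈ Hy u1 c1 := by
    simp [Hy, inner_add_left, inner_smul_left, hw1]
  have h3 := h0 _ h1 h2
  rw [h] at h3 ⊢
  simp only [map_add, map_smul, LinearMap.add_apply, LinearMap.smul_apply, smul_eq_mul] at h3
  simp only [LinearMap.add_apply, LinearMap.sub_apply, LinearMap.smul_apply, smul_eq_mul,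
    LinearMap.flip_apply, ip_apply]
  linear_combination h3

lemma factor2 {g : E → ℝ} (hg : Quad g) {u1 u2 u3 : E} {c1 c2 c3 : ℝ} (hI : Ind3 u1 u2 u3)
    (h1 : ∀ x ∈ Hy u1 c1, x ∈ Hy u3 c3 → g x = 0)
    (h2 : ∀ x ∈ Hy u2 c2, x ∈ Hy u3 c3 → g x = 0) :
    ∃ t : ℝ, ∀ x ∈ Hy u3 c3, g x = (⟪x, u1⟫ - c1) * (t * (⟪x, u2⟫ - c2)) := by
  obtain ⟨x1, x2, x3, ⟨p1, p2, p3⟩, ⟨p4, p5, p6⟩, p7, p8, p9⟩ := hI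
  obtain ⟨l, e, hl⟩ := factor1 hg p1 p3 h1
  have key : ∀ x ∈ Hy u2 c2, x ∈ Hy u3 c3 → l x + e = 0 := by
    intro x hx hx3
    have k : ∀ t : ℝ, (⟪x, u1⟫ + t - c1) * (l x + t * l x1 + e) = 0 := by
      intro t
      have m2 := hy_line hx p2 t
      have m3 := hy_line hx3 p3 t
      have := hl _ m3
      rw [h2 _ m2 m3] at this
      simp only [inner_add_left, inner_smul_left, p1, map_add, map_smul, smul_eq_mul] at this
      simpa using this.symm
    have k0 := k (c1 - ⟪x, u1⟫ + 1)
    have k1 := k (c1 - ⟪x, u1⟫ - 1)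
    have k2 := k (c1 - ⟪x, u1⟫ + 2)
    have e0 : l x + (c1 - ⟪x, u1⟫ + 1) * l x1 + e = 0 := by linear_combination k0
    have e1 : l x + (c1 - ⟪x, u1⟫ - 1) * l x1 + e = 0 := by linear_combination -k1
    have hl1 : l x1 = 0 := by linear_combination (e0 - e1) / 2
    rw [hl1] at e0
    linarith
  refine ⟨l x2, fun x hx => ?_⟩
  rw [hl x hx]
  congr 1
  have m3 : x + (c2 - ⟪x, u2⟫) • x2 ∈ Hy u3 c3 := hy_line hx p6 _
  have m2 : x + (c2 - ⟪x, u2⟫) • x2 ∈ Hy u2 c2 := by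
    simp [Hy, inner_add_left, inner_smul_left, p5]
  have := key _ m2 m3
  simp only [map_add, map_smul, smul_eq_mul] at this
  linear_combination this

lemma ratio' {K : Set E} {u v : E} {c e : ℝ} {p q : E → ℝ}
    (hp : GoodQ K (Hy u c) p) (hq : GoodQ K (Hy v e) q)
    (hb : Bornology.IsBounded (K ∩ Hy u c))
    (hy : ∃ y ∈ interior K, y ∈ Hy u c ∧ y ∈ Hy v e) :
    ∃ q', GoodQ K (Hy v e) q' ∧ ∀ x ∈ Hy u c, x ∈ Hy v e → p x = q' x := by
  obtain ⟨y, hy, hy1, hy2⟩ := hy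
  obtain ⟨r, hr, h⟩ := ratio hp hq hb hy hy1 hy2
  exact ⟨_, hq.smul hr, h⟩

lemma glue3 {K : Set E} (hK : Convex ℝ K) (hKc : IsClosed K) (hS : Supp K)
    {u1 u2 u3 : E} {c1 c2 c3 : ℝ} {q1 q2 q3 : E → ℝ}
    (h1 : GoodQ K (Hy u1 c1) q1) (h2 : GoodQ K (Hy u2 c2) q2) (h3 : GoodQ K (Hy u3 c3) q3)
    (b1 : Bornology.IsBounded (K ∩ Hy u1 c1)) (b2 : Bornology.IsBounded (K ∩ Hy u2 c2))
    (b3 : Bornology.IsBounded (K ∩ Hy u3 c3))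
    (y12 : ∃ y ∈ interior K, y ∈ Hy u1 c1 ∧ y ∈ Hy u2 c2)
    (y13 : ∃ y ∈ interior K, y ∈ Hy u1 c1 ∧ y ∈ Hy u3 c3)
    (y23 : ∃ y ∈ interior K, y ∈ Hy u2 c2 ∧ y ∈ Hy u3 c3)
    (hI : Ind3 u1 u2 u3) :
    ∃ Q : E → ℝ, GoodQ K (Hy u1 c1) Q ∧ GoodQ K (Hy u2 c2) Q ∧ GoodQ K (Hy u3 c3) Q := by
  obtain ⟨p2, h2, e12⟩ := ratio' h1 h2 b1 y12
  obtain ⟨p3, h3, e13⟩ := ratio' h1 h3 b1 y13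
  have e23 := coher hK hKc hS h1 h2 h3 b1 b2 b3 y12 y13 y23 (hI.exists_mem _ _ _) e12 e13
  have hI' := hI
  obtain ⟨x1, x2, x3, ⟨p1, p2', p3'⟩, -⟩ := hI'
  obtain ⟨l, e, hl⟩ := factor1 (h2.1.sub h1.1) p1 p2' (c1 := c1) (c2 := c2)
    (fun x hx hx' => by simp [e12 x hx hx'])
  have hQ0 : Quad (fun x => q1 x + (⟪x, u1⟫ - c1) * (l x + e)) := h1.1.add (Quad.hy_mul l e)
  obtain ⟨t, ht⟩ := factor2 (h3.1.sub hQ0) hI (c1 := c1) (c2 := c2) (c3 := c3)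
    (fun x hx hx' => by
      have hx0 : ⟪x, u1⟫ = c1 := hx
      simp [← e13 x hx hx', hx0])
    (fun x hx hx' => by
      rw [← hl x hx, ← e23 x hx hx']; ring)
  have hQ : Quad (fun x => (q1 x + (⟪x, u1⟫ - c1) * (l x + e)) +
      (⟪x, u1⟫ - c1) * (t * (⟪x, u2⟫ - c2))) := by
    refine hQ0.add ?_
    have := Quad.hy_mul (u := u1) (c := c1) (t • ip u2) (-t * c2)
    convert this using 3
    simp [ip_apply]; ring
  refine ⟨_, h1.congr hQ ?_, h2.congr hQ ?_, h3.congr hQ ?_⟩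
  · intro x hx
    have hx0 : ⟪x, u1⟫ = c1 := hx
    simp [hx0]
  · intro x hx
    have hx0 : ⟪x, u2⟫ = c2 := hx
    have := hl x hx
    simp only [hx0]
    linear_combination -this
  · intro x hx
    have := ht x hx
    linear_combination -this

lemma glue4 {K : Set E} (hK : Convex ℝ K) (hKc : IsClosed K) (hS : Supp K)
    {u1 u2 u3 u4 : E} {c1 c2 c3 c4 : ℝ} {Q q : E → ℝ}
    (h1 : GoodQ K (Hy u1 c1) Q) (h2 : GoodQ K (Hy u2 c2) Q) (h3 : GoodQ K (Hy u3 c3) Q)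
    (h4 : GoodQ K (Hy u4 c4) q)
    (b1 : Bornology.IsBounded (K ∩ Hy u1 c1)) (b2 : Bornology.IsBounded (K ∩ Hy u2 c2))
    (b3 : Bornology.IsBounded (K ∩ Hy u3 c3)) (b4 : Bornology.IsBounded (K ∩ Hy u4 c4))
    (y12 : ∃ y ∈ interior K, y ∈ Hy u1 c1 ∧ y ∈ Hy u2 c2)
    (y13 : ∃ y ∈ interior K, y ∈ Hy u1 c1 ∧ y ∈ Hy u3 c3)
    (y14 : ∃ y ∈ interior K, y ∈ Hy u1 c1 ∧ y ∈ Hy u4 c4)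
    (y24 : ∃ y ∈ interior K, y ∈ Hy u2 c2 ∧ y ∈ Hy u4 c4)
    (y34 : ∃ y ∈ interior K, y ∈ Hy u3 c3 ∧ y ∈ Hy u4 c4)
    (hI2 : Ind3 u1 u2 u4) (hI3 : Ind3 u1 u3 u4) (hI4 : Ind3 u2 u3 u4) :
    GoodQ K (Hy u4 c4) Q := by
  obtain ⟨p, h4, e14⟩ := ratio' h1 h4 b1 y14
  have e24 := coher hK hKc hS h1 h2 h4 b1 b2 b4 y12 y14 y24 (hI2.exists_mem _ _ _)
    (fun _ _ _ => rfl) e14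
  have e34 := coher hK hKc hS h1 h3 h4 b1 b3 b4 y13 y14 y34 (hI3.exists_mem _ _ _)
    (fun _ _ _ => rfl) e14
  obtain ⟨t, ht⟩ := factor2 (h4.1.sub h1.1) hI2 (c1 := c1) (c2 := c2) (c3 := c4)
    (fun x hx hx' => by
      have := e14 x hx hx'
      linarith) (fun x hx hx' => by
      have := e24 x hx hx'
      linarith)
  have ht0 : t = 0 := by
    obtain ⟨y, hy, y3, y4⟩ := y34
    obtain ⟨x1, -, -, ⟨m1, m2, m3⟩, -⟩ := hI3
    obtain ⟨x2, -, -, ⟨m4, m5, m6⟩, -⟩ := hI4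
    -- a direction not orthogonal to u1 and u2
    obtain ⟨w, w1, w2, w3, w4⟩ : ∃ w : E, ⟪w, u1⟫ ≠ 0 ∧ ⟪w, u2⟫ ≠ 0 ∧ ⟪w, u3⟫ = 0 ∧
        ⟪w, u4⟫ = 0 := by
      by_cases k1 : ⟪x1, u2⟫ = 0
      · by_cases k2 : ⟪x2, u1⟫ = 0
        · refine ⟨x1 + x2, ?_⟩
          simp [inner_add_left, *]
        · exact ⟨x2, k2, by simp [m4], m5, m6⟩
      · exact ⟨x1, by simp [m1], k1, m2, m3⟩
    by_contra htn
    have k : ∀ s : ℝ, (⟪y, u1⟫ + s * ⟪w, u1⟫ - c1) * (⟪y, u2⟫ + s * ⟪w, u2⟫ - c2) = 0 := by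
      intro s
      have l3 := hy_line y3 w3 s
      have l4 := hy_line y4 w4 s
      have e1 := ht _ l4
      have e2 := e34 _ l3 l4
      simp only [e2] at e1
      simp only [inner_add_left, inner_smul_left] at e1
      simp only [sub_self, RCLike.conj_to_real] at e1
      rcases mul_eq_zero.mp e1.symm with h | h
      · rw [h, zero_mul]
      · rw [(mul_eq_zero.mp h).resolve_left htn, mul_zero]
    have k0 := k 0
    have k1 := k 1
    have k2 := k (-1)
    have : ⟪w, u1⟫ * ⟪w, u2⟫ = 0 := by linear_combination (k1 + k2) / 2 - k0
    rcases mul_eq_zero.mp this with h | h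
    · exact w1 h
    · exact w2 h
  refine h4.congr h1.1 (fun x hx => ?_)
  have := ht x hx
  rw [ht0] at this
  linarith

lemma exists_dual_vec [FiniteDimensional ℝ E] (S : Submodule ℝ E) {u : E} (hu : u ∉ S) :
    ∃ w : E, (∀ s ∈ S, ⟪w, s⟫ = 0) ∧ ⟪w, u⟫ = 1 := by
  set p : E := S.starProjection u with hp
  have hperp : ∀ s ∈ S, ⟪u - p, s⟫ = 0 := by
    intro s hs
    exact Submodule.starProjection_inner_eq_zero u s hs
  have hpS : p ∈ S := Submodule.starProjection_apply_mem S u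
  have hne : u - p ≠ 0 := by
    intro h
    rw [sub_eq_zero] at h
    exact hu (h ▸ hpS)
  have h1 : ⟪u - p, u⟫ = ‖u - p‖ ^ 2 := by
    have := hperp p hpS
    rw [← real_inner_self_eq_norm_sq, inner_sub_right (u - p) u p, this, sub_zero]
  have h2 : ‖u - p‖ ^ 2 ≠ 0 := by
    have := norm_pos_iff.mpr hne
    positivity
  refine ⟨(‖u - p‖ ^ 2)⁻¹ • (u - p), fun s hs => ?_, ?_⟩
  · rw [inner_smul_left, hperp s hs, mul_zero]
  · rw [inner_smul_left, h1]
    simp [h2]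

lemma ind3_of [FiniteDimensional ℝ E] {a b c : E} (ha : a ≠ 0)
    (hb : b ∉ Submodule.span ℝ {a}) (hc : c ∉ Submodule.span ℝ {a, b}) : Ind3 a b c := by
  obtain ⟨z, hz, hzc⟩ := exists_dual_vec _ hc
  obtain ⟨y0, hy0, hyb⟩ := exists_dual_vec _ hb
  obtain ⟨x0, -, hxa⟩ := exists_dual_vec (⊥ : Submodule ℝ E) (u := a) (by simpa using ha)
  have za := hz a (Submodule.subset_span (by simp))
  have zb := hz b (Submodule.subset_span (by simp))
  have ya := hy0 a (Submodule.subset_span (by simp))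
  refine ⟨x0 - ⟪x0, b⟫ • (y0 - ⟪y0, c⟫ • z) - ⟪x0, c⟫ • z, y0 - ⟪y0, c⟫ • z, z,
    ⟨?_, ?_, ?_⟩, ⟨?_, ?_, ?_⟩, za, zb, hzc⟩ <;>
  simp [inner_sub_left, inner_smul_left, *]

lemma span_pair_ne_top (hdim : 3 ≤ Module.finrank ℝ E) (a b : E) :
    Submodule.span ℝ ({a, b} : Set E) ≠ ⊤ := by
  intro h
  have h1 : Module.finrank ℝ (Submodule.span ℝ ({a, b} : Set E)) ≤ 2 := by
    have h2 := finrank_range_le_card (R := ℝ) ![a, b]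
    have h3 : Set.range ![a, b] = {a, b} := by
      simp [Matrix.range_cons, Matrix.range_empty, Set.pair_comm]
    rw [h3] at h2
    simpa [Set.finrank] using h2
  rw [h, finrank_top] at h1
  omega

lemma dense_compl_sub {S : Submodule ℝ E} (h : S ≠ ⊤) : Dense ((S : Set E)ᶜ) := by
  rw [← interior_eq_empty_iff_dense_compl]
  by_contra hne
  exact h (Submodule.eq_top_of_nonempty_interior' S (nonempty_iff_ne_empty.mpr hne))

lemma span_single_le (a b : E) : Submodule.span ℝ ({a} : Set E) ≤ Submodule.span ℝ {a, b} :=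
  Submodule.span_mono (by simp)

/-- The two hyperplanes meet inside `K`. -/
def Pr (K : Set E) (D : E → ℝ) (a u : E) : Prop :=
  ∃ y ∈ interior K, y ∈ Hy a (D a) ∧ y ∈ Hy u (D u)

lemma Pr.symm {K : Set E} {D : E → ℝ} {a u : E} (h : Pr K D a u) : Pr K D u a := by
  obtain ⟨y, hy, h1, h2⟩ := h
  exact ⟨y, hy, h2, h1⟩

lemma Pr.eventually [FiniteDimensional ℝ E] {K : Set E} {D : E → ℝ} {a u : E} (h : Pr K D a u)
    (hD : ContinuousAt D u) (hu : u ∉ Submodule.span ℝ {a}) :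
    ∀ᶠ v in nhds u, Pr K D a v := by
  obtain ⟨y, hy, hya, hyu⟩ := h
  obtain ⟨w, hw, hwu⟩ := exists_dual_vec _ hu
  have hwa := hw a (Submodule.subset_span (by simp))
  have hc : ContinuousAt (fun v => y + ((D v - ⟪y, v⟫) / ⟪w, v⟫) • w) u := by
    have h1 : ContinuousAt (fun v : E => ⟪y, v⟫) u := by fun_prop
    have h2 : ContinuousAt (fun v : E => ⟪w, v⟫) u := by fun_prop
    exact continuousAt_const.add (((hD.sub h1).div h2 (by simp [hwu])).smul continuousAt_const)
  have hyu' : ⟪y, u⟫ = D u := hyu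
  have e1 : ∀ᶠ v in nhds u, y + ((D v - ⟪y, v⟫) / ⟪w, v⟫) • w ∈ interior K := by
    apply hc.eventually_mem
    apply isOpen_interior.mem_nhds
    simpa [hyu'] using hy
  have e2 : ∀ᶠ v in nhds u, ⟪w, v⟫ ≠ 0 := by
    have h2 : ContinuousAt (fun v : E => ⟪w, v⟫) u := by fun_prop
    exact h2.eventually_ne (by simp [hwu])
  filter_upwards [e1, e2] with v h1 h2
  refine ⟨_, h1, hy_line hya hwa _, ?_⟩
  simp only [Hy, mem_ofPred_eq, inner_add_left, inner_smul_left, RCLike.conj_to_real]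
  field_simp
  ring

lemma stepI [FiniteDimensional ℝ E] {K : Set E} {D : E → ℝ} {p q : E}
    (hp : p ≠ 0) (hq : q ∉ Submodule.span ℝ {p}) (hy : ∃ y ∈ interior K, y ∈ Hy p (D p)) :
    ∃ y ∈ interior K, (D p < ⟪y, p⟫ ∧ ⟪y, q⟫ < D q) ∨ (⟪y, p⟫ < D p ∧ D q < ⟪y, q⟫) := by
  obtain ⟨y, hy, hyp⟩ := hy
  obtain ⟨w, hw, hwq⟩ := exists_dual_vec _ hq
  have hwp := hw p (Submodule.subset_span (by simp))
  have ev : ∀ (y : E), y ∈ interior K → ∀ d : E, ∀ᶠ t in nhds (0 : ℝ), y + t • d ∈ interior K := by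
    intro y hy d
    have : ContinuousAt (fun t : ℝ => y + t • d) 0 := by fun_prop
    apply this.eventually_mem
    apply isOpen_interior.mem_nhds
    simpa using hy
  obtain ⟨z, hz, hzp, hzq⟩ : ∃ z ∈ interior K, z ∈ Hy p (D p) ∧ ⟪z, q⟫ ≠ D q := by
    by_cases h : ⟪y, q⟫ = D q
    · have h1 : ∀ᶠ t in nhdsWithin (0 : ℝ) (Ioi 0), y + t • w ∈ interior K :=
        (ev y hy w).filter_mono nhdsWithin_le_nhds
      obtain ⟨t, ht, ht0⟩ := (h1.and self_mem_nhdsWithin).exists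
      refine ⟨_, ht, hy_line hyp hwp t, ?_⟩
      have ht0' : (0 : ℝ) < t := ht0
      simp [inner_add_left, inner_smul_left, h, hwq, ht0'.ne']
    · exact ⟨y, hy, hyp, h⟩
  have hzp' : ⟪z, p⟫ = D p := hzp
  have hpp : 0 < ⟪p, p⟫ := real_inner_self_pos.mpr hp
  have cont : ContinuousAt (fun t : ℝ => ⟪z + t • p, q⟫) 0 := by fun_prop
  rcases lt_or_gt_of_ne hzq with h | h
  · have h2 : ∀ᶠ t in nhds (0 : ℝ), ⟪z + t • p, q⟫ < D q :=
      cont.eventually_lt continuousAt_const (by simpa using h)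
    have h1 : ∀ᶠ t in nhdsWithin (0 : ℝ) (Ioi 0), z + t • p ∈ interior K ∧ ⟪z + t • p, q⟫ < D q :=
      ((ev z hz p).and h2).filter_mono nhdsWithin_le_nhds
    obtain ⟨t, ⟨ht, ht2⟩, ht0⟩ := (h1.and self_mem_nhdsWithin).exists
    have ht0' : (0 : ℝ) < t := ht0
    refine ⟨_, ht, Or.inl ⟨?_, ht2⟩⟩
    rw [inner_add_left, inner_smul_left, hzp']
    have := mul_pos ht0' hpp
    simpa using this
  · have h2 : ∀ᶠ t in nhds (0 : ℝ), D q < ⟪z + t • p, q⟫ :=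
      continuousAt_const.eventually_lt cont (by simpa using h)
    have h1 : ∀ᶠ t in nhdsWithin (0 : ℝ) (Iio 0), z + t • p ∈ interior K ∧ D q < ⟪z + t • p, q⟫ :=
      ((ev z hz p).and h2).filter_mono nhdsWithin_le_nhds
    obtain ⟨t, ⟨ht, ht2⟩, ht0⟩ := (h1.and self_mem_nhdsWithin).exists
    have ht0' : t < (0 : ℝ) := ht0
    refine ⟨_, ht, Or.inr ⟨?_, ht2⟩⟩
    rw [inner_add_left, inner_smul_left, hzp']
    have := mul_neg_of_neg_of_pos ht0' hpp
    simpa using this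

/-- Intermediate value on a segment. -/
lemma ivt_seg {D : E → ℝ} {V : Set E} (hV : Convex ℝ V) (hD : ContinuousOn D V) {p q x : E}
    (hp : p ∈ V) (hq : q ∈ V) (h1 : D p < ⟪x, p⟫) (h2 : ⟪x, q⟫ < D q) :
    ∃ s ∈ Icc (0 : ℝ) 1, p + s • (q - p) ∈ V ∧ x ∈ Hy (p + s • (q - p)) (D (p + s • (q - p))) := by
  have hmem : ∀ s ∈ Icc (0 : ℝ) 1, p + s • (q - p) ∈ V := fun s hs =>
    hV.add_smul_sub_mem hp hq hs
  have hc : ContinuousOn (fun s : ℝ => ⟪x, p + s • (q - p)⟫ - D (p + s • (q - p))) (Icc 0 1) := by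
    refine ContinuousOn.sub (by fun_prop) ?_
    exact hD.comp (by fun_prop) hmem
  obtain ⟨s, hs, hs'⟩ := intermediate_value_Icc' zero_le_one hc
    (show (0 : ℝ) ∈ _ from ⟨by simp; linarith, by simp; linarith⟩)
  refine ⟨s, hs, hmem s hs, ?_⟩
  simp only at hs'
  simp only [Hy, mem_ofPred_eq]
  linarith

lemma four_aux [FiniteDimensional ℝ E] {D : E → ℝ} {V : Set E} (hV : Convex ℝ V) (hVo : IsOpen V)
    (hD : ContinuousOn D V) {p q w y : E} (hI : Ind3 p q w)
    (hp : p ∈ V) (hq : q ∈ V) (h1 : D p < ⟪y, p⟫) (h2 : ⟪y, q⟫ < D q) :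
    ∃ u : Fin 4 → E, (∀ i, u i ∈ V ∧ y ∈ Hy (u i) (D (u i))) ∧
      ∀ i j, i ≠ j → u i ∉ Submodule.span ℝ {u j} := by
  have evp : ∀ᶠ t in nhds (0 : ℝ), p + t • w ∈ V ∧ D (p + t • w) < ⟪y, p + t • w⟫ := by
    have hc : ContinuousAt (fun t : ℝ => p + t • w) 0 := by fun_prop
    have hc0 : Filter.Tendsto (fun t : ℝ => p + t • w) (nhds 0) (nhds p) := by
      simpa [ContinuousAt] using hc
    have : ∀ᶠ v in nhds p, v ∈ V ∧ D v < ⟪y, v⟫ :=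
      (hVo.eventually_mem hp).and ((hD.continuousAt (hVo.mem_nhds hp)).eventually_lt
        (by fun_prop) h1)
    exact hc0.eventually this
  have evq : ∀ᶠ t in nhds (0 : ℝ), q + t • w ∈ V ∧ ⟪y, q + t • w⟫ < D (q + t • w) := by
    have hc : ContinuousAt (fun t : ℝ => q + t • w) 0 := by fun_prop
    have hc0 : Filter.Tendsto (fun t : ℝ => q + t • w) (nhds 0) (nhds q) := by
      simpa [ContinuousAt] using hc
    have : ∀ᶠ v in nhds q, v ∈ V ∧ ⟪y, v⟫ < D v :=
      (hVo.eventually_mem hq).and (ContinuousAt.eventually_lt (by fun_prop)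
        (hD.continuousAt (hVo.mem_nhds hq)) h2)
    exact hc0.eventually this
  obtain ⟨ε, hε, hball⟩ := Metric.eventually_nhds_iff.mp (evp.and evq)
  have key : ∀ i : Fin 4, ∃ s : ℝ, p + (ε * i / 4) • w + s • (q - p) ∈ V ∧
      y ∈ Hy (p + (ε * i / 4) • w + s • (q - p)) (D (p + (ε * i / 4) • w + s • (q - p))) := by
    intro i
    have hi : dist (ε * i / 4) 0 < ε := by
      rw [Real.dist_0_eq_abs, abs_of_nonneg (by positivity)]
      have : (i : ℝ) < 4 := by exact_mod_cast i.2
      nlinarith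
    obtain ⟨⟨a1, a2⟩, a3, a4⟩ := hball hi
    obtain ⟨s, -, hs⟩ := ivt_seg hV hD a1 a3 a2 a4
    refine ⟨s, ?_⟩
    have e : q + (ε * i / 4) • w - (p + (ε * i / 4) • w) = q - p := by abel
    rwa [e] at hs
  choose s hs using key
  refine ⟨fun i => p + (ε * i / 4) • w + s i • (q - p), hs, fun i j hij hmem => ?_⟩
  rw [Submodule.mem_span_singleton] at hmem
  obtain ⟨k, hk⟩ := hmem
  obtain ⟨x1, x2, x3, ⟨p1, p2, p3⟩, ⟨p4, p5, p6⟩, p7, p8, p9⟩ := hI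
  have e1 := congrArg (fun v => ⟪x1, v⟫) hk
  have e2 := congrArg (fun v => ⟪x2, v⟫) hk
  have e3 := congrArg (fun v => ⟪x3, v⟫) hk
  simp only [inner_add_right, inner_smul_right, inner_sub_right,
    p1, p2, p3, p4, p5, p6, p7, p8, p9] at e1 e2 e3
  have hk1 : k = 1 := by linear_combination e1 + e2
  rw [hk1] at e3
  have : (i : ℝ) = j := by
    have : ε * ((i : ℝ) - j) = 0 := by linear_combination -4 * e3
    have := (mul_eq_zero.mp this).resolve_left hε.ne'
    linarith
  apply hij
  exact Fin.ext (by exact_mod_cast this)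

lemma notMem_span_symm {a b : E} (ha : a ≠ 0) (h : b ∉ Submodule.span ℝ {a}) :
    a ∉ Submodule.span ℝ {b} := by
  intro h'
  rw [Submodule.mem_span_singleton] at h'
  obtain ⟨k, hk⟩ := h'
  have hk0 : k ≠ 0 := by rintro rfl; simp at hk; exact ha hk.symm
  apply h
  rw [Submodule.mem_span_singleton]
  exact ⟨k⁻¹, by rw [← hk, smul_smul, inv_mul_cancel₀ hk0, one_smul]⟩

lemma notMem_event [FiniteDimensional ℝ E] {S : Submodule ℝ E} {u : E} (hu : u ∉ S) :
    ∀ᶠ v in nhds u, v ∉ S :=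
  (S.closed_of_finiteDimensional.isOpen_compl).mem_nhds hu

theorem local_thm [FiniteDimensional ℝ E] (hdim : 3 ≤ Module.finrank ℝ E) {K : Set E}
    (hK : Convex ℝ K) (hKc : IsClosed K) (hS : Supp K) {D : E → ℝ} {V : Set E}
    (hV : Convex ℝ V) (hVo : IsOpen V) (hVn : V.Nonempty) (hV0 : (0 : E) ∉ V)
    (hD : ContinuousOn D V)
    (hbd : ∀ v ∈ V, ∀ c, Bornology.IsBounded (K ∩ Hy v c))
    (hinn : ∀ v ∈ V, ∃ y ∈ interior K, y ∈ Hy v (D v))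
    (hq : ∀ v ∈ V, ∃ q, GoodQ K (Hy v (D v)) q) :
    ∃ Q : E → ℝ, (∃ u ∈ V, GoodQ K (Hy u (D u)) Q) ∧
      ∃ W : Set E, IsOpen W ∧ (W ∩ frontier K).Nonempty ∧ ∀ x ∈ W ∩ frontier K, Q x = 0 := by
  have hne : ∀ v ∈ V, v ≠ 0 := fun v hv h => hV0 (h ▸ hv)
  have hDc : ∀ v ∈ V, ContinuousAt D v := fun v hv => hD.continuousAt (hVo.mem_nhds hv)
  have hsing : ∀ a : E, Submodule.span ℝ ({a} : Set E) ≠ ⊤ := fun a => by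
    have := span_pair_ne_top hdim a a
    simpa using this
  -- two points with a sign change, in any convex open subset
  have two : ∀ V' ⊆ V, IsOpen V' → V'.Nonempty → ∃ p ∈ V', ∃ q ∈ V', q ∉ Submodule.span ℝ {p} ∧
      ∃ y ∈ interior K, D p < ⟪y, p⟫ ∧ ⟪y, q⟫ < D q := by
    intro V' hVV' ho hn
    obtain ⟨p, hp⟩ := hn
    obtain ⟨q, hq, hqp⟩ := (dense_compl_sub (hsing p)).inter_open_nonempty V' ho ⟨p, hp⟩
    obtain ⟨y, hy, h | h⟩ := stepI (D := D) (hne p (hVV' hp)) hqp (hinn p (hVV' hp))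
    · exact ⟨p, hp, q, hq, hqp, y, hy, h⟩
    · exact ⟨q, hq, p, hp, notMem_span_symm (hne p (hVV' hp)) hqp, y, hy, h.2, h.1⟩
  obtain ⟨p, hp, q, hqV, hqp, y, hy, h1, h2⟩ := two V Subset.rfl hVo hVn
  obtain ⟨w, -, hw⟩ := (dense_compl_sub (span_pair_ne_top hdim p q)).inter_open_nonempty _
    isOpen_univ ⟨0, trivial⟩
  obtain ⟨u, huV, hup⟩ := four_aux hV hVo hD (ind3_of (hne p hp) hqp hw) hp hqV h1 h2
  have hPr : ∀ i j, Pr K D (u i) (u j) := fun i j => ⟨y, hy, (huV i).2, (huV j).2⟩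
  -- choose the third vector
  have ev3 : ∀ᶠ v in nhds (u 2), v ∈ V ∧ Pr K D (u 0) v ∧ Pr K D (u 1) v ∧ Pr K D (u 3) v ∧
      v ∉ Submodule.span ℝ {u 3} := by
    have hc := hDc _ (huV 2).1
    exact (hVo.eventually_mem (huV 2).1).and <| ((hPr 0 2).eventually hc (hup 2 0 (by decide))).and <|
      ((hPr 1 2).eventually hc (hup 2 1 (by decide))).and <|
      ((hPr 3 2).eventually hc (hup 2 3 (by decide))).and <| notMem_event (hup 2 3 (by decide))
  obtain ⟨N3, hN3, hN3o, hN3u⟩ := _root_.eventually_nhds_iff.mp ev3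
  obtain ⟨u3, hu3N, hu3⟩ := (dense_compl_sub
    (span_pair_ne_top hdim (u 0) (u 1))).inter_open_nonempty N3 hN3o ⟨_, hN3u⟩
  obtain ⟨hu3V, P03, P13, P33, hu33⟩ := hN3 u3 hu3N
  -- choose the fourth vector
  have hu3s : u 3 ∉ Submodule.span ℝ {u3} := notMem_span_symm (hne _ (huV 3).1) hu33
  have ev4 : ∀ᶠ v in nhds (u 3), v ∈ V ∧ Pr K D (u 0) v ∧ Pr K D (u 1) v ∧ Pr K D u3 v := by
    have hc := hDc _ (huV 3).1
    exact (hVo.eventually_mem (huV 3).1).and <| ((hPr 0 3).eventually hc (hup 3 0 (by decide))).and <|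
      ((hPr 1 3).eventually hc (hup 3 1 (by decide))).and <|
      (P33.symm.eventually hc hu3s)
  obtain ⟨N4, hN4, hN4o, hN4u⟩ := _root_.eventually_nhds_iff.mp ev4
  have hopen : ∀ S : Submodule ℝ E, IsOpen ((S : Set E)ᶜ) := fun S =>
    S.closed_of_finiteDimensional.isOpen_compl
  set S1 := Submodule.span ℝ {u 0, u 1} with hS1
  set S2 := Submodule.span ℝ {u 0, u3} with hS2
  set S3 := Submodule.span ℝ {u 1, u3} with hS3
  have dn : Dense ((S1 : Set E)ᶜ ∩ (S2 : Set E)ᶜ ∩ (S3 : Set E)ᶜ) :=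
    ((dense_compl_sub (span_pair_ne_top hdim _ _)).inter_of_isOpen_left
      (dense_compl_sub (span_pair_ne_top hdim _ _)) (hopen _)).inter_of_isOpen_left
      (dense_compl_sub (span_pair_ne_top hdim _ _)) ((hopen _).inter (hopen _))
  obtain ⟨u4, hu4N, hu4⟩ := dn.inter_open_nonempty N4 hN4o ⟨_, hN4u⟩
  have hGo : IsOpen (N4 ∩ ((S1 : Set E)ᶜ ∩ (S2 : Set E)ᶜ ∩ (S3 : Set E)ᶜ)) :=
    hN4o.inter (((hopen _).inter (hopen _)).inter (hopen _))
  obtain ⟨ε, hε, hG⟩ := Metric.isOpen_iff.mp hGo u4 ⟨hu4N, hu4⟩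
  -- the quadric
  have i013 : u3 ∉ Submodule.span ℝ {u 0} := fun h => hu3 (span_single_le _ _ h)
  have i113 : u3 ∉ Submodule.span ℝ {u 1} := fun h => hu3 (by
    rw [hS1, Set.pair_comm]; exact span_single_le _ _ h)
  obtain ⟨q0, hq0⟩ := hq _ (huV 0).1
  obtain ⟨q1, hq1⟩ := hq _ (huV 1).1
  obtain ⟨q3, hq3⟩ := hq _ hu3V
  obtain ⟨Q, Q0, Q1, Q3⟩ := glue3 hK hKc hS hq0 hq1 hq3 (hbd _ (huV 0).1 _) (hbd _ (huV 1).1 _)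
    (hbd _ hu3V _) (hPr 0 1) P03 P13 (ind3_of (hne _ (huV 0).1) (hup 1 0 (by decide)) hu3)
  have main : ∀ v ∈ ball u4 ε, v ∈ V ∧ GoodQ K (Hy v (D v)) Q := by
    intro v hv
    obtain ⟨hv1, ⟨hv2, hv3⟩, hv4⟩ := hG hv
    obtain ⟨hvV, P0, P1, P3⟩ := hN4 v hv1
    obtain ⟨q, hqv⟩ := hq v hvV
    exact ⟨hvV, glue4 hK hKc hS Q0 Q1 Q3 hqv (hbd _ (huV 0).1 _) (hbd _ (huV 1).1 _)
      (hbd _ hu3V _) (hbd _ hvV _) (hPr 0 1) P03 P0 P1 P3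
      (ind3_of (hne _ (huV 0).1) (hup 1 0 (by decide)) hv2)
      (ind3_of (hne _ (huV 0).1) i013 hv3) (ind3_of (hne _ (huV 1).1) i113 hv4)⟩
  refine ⟨Q, ⟨u 0, (huV 0).1, Q0⟩, ?_⟩
  obtain ⟨p, hp, q, hq', hqp, y, hy, h1, h2⟩ := two (ball u4 ε) (fun v hv => (main v hv).1)
    isOpen_ball ⟨u4, mem_ball_self hε⟩
  refine ⟨{x | D p < ⟪x, p⟫} ∩ {x | ⟪x, q⟫ < D q}, ?_, ?_, ?_⟩
  · exact (isOpen_lt (by fun_prop) (by fun_prop)).inter (isOpen_lt (by fun_prop) (by fun_prop))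
  · obtain ⟨w0, -, hw0⟩ := (dense_compl_sub (span_pair_ne_top hdim p q)).inter_open_nonempty _
      isOpen_univ ⟨0, trivial⟩
    obtain ⟨w, hw, hw1⟩ := exists_dual_vec _ hw0
    have wp := hw p (Submodule.subset_span (by simp))
    have wq := hw q (Submodule.subset_span (by simp))
    have wne : w ≠ 0 := by rintro rfl; simp at hw1
    obtain ⟨a, b, -, -, -, hb⟩ := exit_hy (hbd p (main p hp).1 ⟪y, p⟫) hy rfl wne wp
    refine ⟨_, ⟨?_, ?_⟩, hb⟩
    · simpa [inner_add_left, inner_smul_left, wp] using h1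
    · simpa [inner_add_left, inner_smul_left, wq] using h2
  · rintro x ⟨⟨hx1, hx2⟩, hxf⟩
    obtain ⟨s, -, hsV, hs⟩ := ivt_seg (convex_ball u4 ε)
      (hD.mono (fun v hv => (main v hv).1)) hp hq' hx1 hx2
    exact (main _ hsV).2.2.1 x hs hxf

lemma strict_single {n : ℕ} {K H : Set (En n)} (hK : Convex ℝ K) (hKc : IsClosed K)
    (hKsc : IsStrictlyConvexSet K) (hH : Convex ℝ H) (hHi : ∀ y ∈ interior K, y ∉ H)
    {x y : En n} (hx : x ∈ K) (hxH : x ∈ H) (hy : y ∈ K) (hyH : y ∈ H) : x = y := by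
  by_contra hne
  have hfr : ∀ z ∈ K, z ∈ H → z ∈ frontier K := fun z hz hzH => by
    rw [hKc.frontier_eq]
    exact ⟨hz, fun h => hHi z h hzH⟩
  exact hKsc x (hfr x hx hxH) y (hfr y hy hyH) hne fun z hz =>
    hfr z (hK.segment_subset hx hy hz) (hH.segment_subset hxH hyH hz)

lemma convex_Hy (u : E) (c : ℝ) : Convex ℝ (Hy u c) := by
  intro x hx y hy a b ha hb hab
  simp only [Hy, mem_ofPred_eq] at *
  rw [inner_add_left, real_inner_smul_left, real_inner_smul_left, hx, hy, ← add_mul, hab, one_mul]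

lemma bdd_near [FiniteDimensional ℝ E] {K : Set E} (hK : Convex ℝ K) (hKc : IsClosed K) {x0 v0 : E}
    (hx0 : x0 ∈ K) (hv : ∀ x ∈ K, ⟪x - x0, v0⟫ = 0 → x = x0) :
    ∃ r : ℝ, 0 < r ∧ ∀ v, ‖v - v0‖ < r → ∀ c, Bornology.IsBounded (K ∩ Hy v c) := by
  obtain ⟨η, hη, hmin⟩ : ∃ η : ℝ, 0 < η ∧ ∀ x ∈ K, ‖x - x0‖ = 1 → η ≤ |⟪x - x0, v0⟫| := by
    have hcomp : IsCompact (K ∩ sphere x0 1) := (isCompact_sphere x0 1).inter_left hKc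
    by_cases hne : (K ∩ sphere x0 1).Nonempty
    · obtain ⟨z, hz, hzm⟩ := hcomp.exists_isMinOn hne
        (f := fun x => |⟪x - x0, v0⟫|) (by fun_prop)
      refine ⟨|⟪z - x0, v0⟫|, abs_pos.mpr fun h => ?_, fun x hx hx1 => ?_⟩
      · have h1 := hv z hz.1 h
        have h2 := hz.2
        rw [h1, mem_sphere, dist_self] at h2
        norm_num at h2
      · exact hzm ⟨hx, by rw [mem_sphere, dist_eq_norm, hx1]⟩
    · refine ⟨1, one_pos, fun x hx hx1 => ?_⟩
      exact absurd ⟨x, hx, by rw [mem_sphere, dist_eq_norm, hx1]⟩ hne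
  refine ⟨η / 2, by linarith, fun v hvv c => ?_⟩
  refine (isBounded_closedBall (x := x0) (r := max 1 (|c - ⟪x0, v⟫| / (η / 2)))).subset ?_
  rintro x ⟨hx, hxc⟩
  rw [mem_closedBall, dist_eq_norm]
  by_cases hN : ‖x - x0‖ ≤ 1
  · exact le_max_of_le_left hN
  apply le_max_of_le_right
  push Not at hN
  have hN0 : 0 < ‖x - x0‖ := by linarith
  have hx' : x0 + ‖x - x0‖⁻¹ • (x - x0) ∈ K :=
    hK.add_smul_sub_mem hx0 hx ⟨by positivity, inv_le_one_of_one_le₀ hN.le⟩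
  have h1 := hmin _ hx' (by
    rw [add_sub_cancel_left, norm_smul, norm_inv, norm_norm, inv_mul_cancel₀ hN0.ne'])
  rw [add_sub_cancel_left, real_inner_smul_left, abs_mul, abs_inv, abs_norm] at h1
  have h2 : η * ‖x - x0‖ ≤ |⟪x - x0, v0⟫| := by
    have := mul_le_mul_of_nonneg_left h1 hN0.le
    rw [← mul_assoc, mul_inv_cancel₀ hN0.ne', one_mul] at this
    linarith
  have h3 : |⟪x - x0, v - v0⟫| ≤ ‖x - x0‖ * (η / 2) :=
    (abs_real_inner_le_norm _ _).trans (mul_le_mul_of_nonneg_left hvv.le hN0.le)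
  have h4 : c - ⟪x0, v⟫ = ⟪x - x0, v0⟫ + ⟪x - x0, v - v0⟫ := by
    have : ⟪x, v⟫ = c := hxc
    rw [← inner_add_right, add_sub_cancel, inner_sub_left, this]
  rw [le_div_iff₀ (by linarith), h4]
  have h5 := abs_sub_abs_le_abs_sub ⟪x - x0, v0⟫ (-⟪x - x0, v - v0⟫)
  rw [abs_neg, sub_neg_eq_add] at h5
  linarith

lemma Quad.sum {ι : Type*} (s : Finset ι) {f : ι → E → ℝ} (h : ∀ i, Quad (f i)) :
    Quad (fun x => ∑ i ∈ s, f i x) := by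
  classical
  induction s using Finset.induction_on with
  | empty => exact ⟨0, 0, 0, fun x => by simp⟩
  | insert i s hi ih =>
    have := (h i).add ih
    simpa [Finset.sum_insert hi] using this

lemma quad_poly {m : ℕ} (a : Matrix (Fin m) (Fin m) ℝ) (b : Fin m → ℝ) (c : ℝ) :
    Quad (fun x : En m => (∑ i, ∑ k, a i k * x i * x k) + 2 * (∑ i, b i * x i) + c) := by
  have h1 : Quad (fun x : En m => ∑ i, ∑ k, a i k * x i * x k) := by
    refine Quad.sum _ fun i => Quad.sum _ fun k => ?_
    have := Quad.mul_affine (E := En m) (a i k • (EuclideanSpace.proj i : En m →L[ℝ] ℝ).toLinearMap)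
      (EuclideanSpace.proj k : En m →L[ℝ] ℝ).toLinearMap 0 0
    simpa using this
  have h2 : Quad (fun x : En m => ∑ i, b i * x i) := by
    refine Quad.sum _ fun i => ?_
    have := Quad.mul_affine (E := En m) (EuclideanSpace.proj i : En m →L[ℝ] ℝ).toLinearMap
      0 0 (b i)
    simpa [mul_comm] using this
  have h3 : Quad (fun x : En m => c) := ⟨0, 0, c, fun x => by simp⟩
  exact (h1.add (h2.smul 2)).add h3

lemma comp_facts {m : ℕ} {Q U : Set (En m)} (hQ : IsRealQuadricSurface Q)
    (hU : U ∈ componentsIn Qᶜ) :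
    IsOpen U ∧ U.Nonempty ∧ U ≠ univ ∧ ∃ q : En m → ℝ, Quad q ∧ Continuous q ∧
      (∀ x ∈ frontier U, q x = 0) ∧ ∀ x ∈ U, q x ≠ 0 := by
  obtain ⟨⟨a, b, c, -, -, hQe⟩, hQn⟩ := hQ
  set q : En m → ℝ := fun x => (∑ i, ∑ k, a i k * x i * x k) + 2 * (∑ i, b i * x i) + c with hq
  have hqc : Continuous q := by
    rw [hq]; fun_prop
  have hmem : ∀ x, x ∈ Q ↔ q x = 0 := fun x => by rw [hQe]; rfl
  have hQo : IsOpen Qᶜ := by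
    have : Q = q ⁻¹' {0} := by ext x; simp [hmem]
    rw [this]
    exact (isClosed_singleton.preimage hqc).isOpen_compl
  obtain ⟨x0, hx0, rfl⟩ := hU
  have hsub := connectedComponentIn_subset Qᶜ x0
  have hopen : IsOpen (connectedComponentIn Qᶜ x0) := hQo.connectedComponentIn
  refine ⟨hopen, ⟨x0, mem_connectedComponentIn hx0⟩, fun h => ?_, q, quad_poly a b c, hqc, ?_, ?_⟩
  · obtain ⟨z, hz⟩ := hQn
    exact hsub (h ▸ mem_univ z) hz
  · intro x hx
    by_contra hne
    have hxQ : x ∈ Qᶜ := fun h => hne ((hmem x).mp h)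
    have h1 : IsOpen (connectedComponentIn Qᶜ x) := hQo.connectedComponentIn
    obtain ⟨z, hz1, hz2⟩ := mem_closure_iff.mp hx.1 _ h1 (mem_connectedComponentIn hxQ)
    have e : connectedComponentIn Qᶜ x = connectedComponentIn Qᶜ x0 :=
      (connectedComponentIn_eq hz1).trans (connectedComponentIn_eq hz2).symm
    have : x ∈ connectedComponentIn Qᶜ x0 := e ▸ mem_connectedComponentIn hxQ
    rw [hopen.frontier_eq] at hx
    exact hx.2 this
  · intro x hx h
    exact hsub hx ((hmem x).mpr h)

lemma frontier_not_subsingleton {F : Type*} [NormedAddCommGroup F] [InnerProductSpace ℝ F]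
    (hr : 1 < Module.rank ℝ F) {U : Set F} (hUo : IsOpen U) (hUc : Convex ℝ U)
    (hUn : U.Nonempty) (hUu : U ≠ univ) (hs : (frontier U).Subsingleton) : False := by
  obtain ⟨p, hp⟩ := nonempty_frontier_iff.mpr ⟨hUn, hUu⟩
  have hpU : p ∉ U := by
    rw [hUo.frontier_eq] at hp
    exact hp.2
  have hcon := (isConnected_compl_singleton_of_one_lt_rank hr p).isPreconnected
  have hsub : ({p}ᶜ : Set F) ⊆ U := by
    by_contra h
    obtain ⟨z, hz, hzU⟩ := not_subset.mp h
    obtain ⟨x, hx⟩ := hUn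
    obtain ⟨w, hw, hwf⟩ := preconn_frontier hcon
      ⟨x, fun h => hpU ((mem_singleton_iff.mp h) ▸ hx), hx⟩ ⟨z, hz, hzU⟩
    exact hw (hs hwf hp)
  have : Nontrivial F := by
    by_contra h
    rw [not_nontrivial_iff_subsingleton] at h
    rw [rank_subsingleton'] at hr
    simp at hr
  obtain ⟨d, hd⟩ := exists_ne (0 : F)
  have h1 : p + d ∈ U := hsub (by simpa using hd)
  have h2 : p - d ∈ U := hsub (by simpa using hd)
  apply hpU
  have := hUc h1 h2 (a := 1 / 2) (b := 1 / 2) (by norm_num) (by norm_num) (by norm_num)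
  convert this using 1
  module

lemma goodQ_of {F : Type*} [NormedAddCommGroup F] [InnerProductSpace ℝ F] [Nontrivial F]
    {K : Set E} (hK : Convex ℝ K) {u : E} {c : ℝ} (hb : Bornology.IsBounded (K ∩ Hy u c))
    (φ : F →ᵃⁱ[ℝ] E) (hφ : range (φ : F → E) = Hy u c) {U : Set F} (hUc : Convex ℝ U)
    (hUo : IsOpen U)
    (hfr : (φ : F → E) ⁻¹' (frontier K ∩ Hy u c) = frontier U) {q : F → ℝ} (hq : Quad q)
    (hqc : Continuous q) (hq0 : ∀ x ∈ frontier U, q x = 0) (hq1 : ∀ x ∈ U, q x ≠ 0) :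
    ∃ p, GoodQ K (Hy u c) p := by
  have hmem : ∀ z, φ z ∈ Hy u c := fun z => hφ ▸ mem_range_self z
  have hlin : ∀ (y : F) (t : ℝ) (d : F), φ (y + t • d) = φ y + t • φ.linearIsometry d := by
    intro y t d
    have := φ.map_vadd y (t • d)
    rw [vadd_eq_add, vadd_eq_add, map_smul, add_comm, add_comm _ (φ y)] at this
    exact this
  obtain ⟨d, hd⟩ := exists_ne (0 : F)
  have hd' : φ.linearIsometry d ≠ 0 := fun h =>
    hd (φ.linearIsometry.injective (by rw [h, map_zero]))
  have hdu : ⟪φ.linearIsometry d, u⟫ = 0 := by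
    have h1 := hy_sub (hmem (0 + (1 : ℝ) • d)) (hmem 0)
    rw [hlin] at h1
    simpa using h1
  have hWU : ∀ y, φ y ∈ interior K → y ∈ U := by
    intro y hy
    obtain ⟨a, b, ha, hb', fa, fb⟩ := exit_hy hb hy (hmem y) hd' hdu
    rw [← hlin] at fa fb
    have ca : y + a • d ∈ closure U := frontier_subset_closure (hfr ▸ ⟨fa, hmem _⟩)
    have cb : y + b • d ∈ closure U := frontier_subset_closure (hfr ▸ ⟨fb, hmem _⟩)
    have hba : 0 < b - a := by linarith
    have hc : y ∈ closure U := by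
      have := hUc.closure ca cb (a := b / (b - a)) (b := -a / (b - a))
        (by positivity) (div_nonneg (by linarith) hba.le) (by field_simp; ring)
      convert this using 1
      rw [smul_add, smul_add, smul_smul, smul_smul]
      have e1 : (b / (b - a)) • y + (-a / (b - a)) • y = y := by
        rw [← add_smul]
        have : b / (b - a) + -a / (b - a) = 1 := by field_simp; ring
        rw [this, one_smul]
      have e2 : (b / (b - a) * a) • d + (-a / (b - a) * b) • d = 0 := by
        rw [← add_smul]
        have : b / (b - a) * a + -a / (b - a) * b = 0 := by field_simp; ring
        rw [this, zero_smul]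
      rw [add_add_add_comm, e1, e2, add_zero]
    by_contra hyU
    have : y ∈ frontier U := by
      rw [hUo.frontier_eq]
      exact ⟨hc, hyU⟩
    rw [← hfr] at this
    exact this.1.2 hy
  set W : Set F := (φ : F → E) ⁻¹' interior K with hW
  have hWc : Convex ℝ W := hK.interior.affine_preimage φ.toAffineMap
  -- the sign
  obtain ⟨r, hr⟩ : ∃ r : ℝ, ∀ y ∈ W, r * q y < 0 := by
    by_cases h1 : ∀ y ∈ W, q y < 0
    · exact ⟨1, fun y hy => by simpa using h1 y hy⟩
    by_cases h2 : ∀ y ∈ W, 0 < q y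
    · exact ⟨-1, fun y hy => by simpa using h2 y hy⟩
    push Not at h1 h2
    obtain ⟨y1, hy1, h1⟩ := h1
    obtain ⟨y2, hy2, h2⟩ := h2
    obtain ⟨y, hy, hy0⟩ := hWc.isPreconnected.intermediate_value hy2 hy1 hqc.continuousOn ⟨h2, h1⟩
    exact absurd hy0 (hq1 y (hWU y hy))
  obtain ⟨g, hg⟩ := LinearMap.exists_leftInverse_of_injective φ.linearIsometry.toLinearMap
    (LinearMap.ker_eq_bot.mpr φ.linearIsometry.injective)
  have hgφ : ∀ z, g (φ z) + -(g (φ 0)) = z := by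
    intro z
    have h1 := hlin 0 1 z
    rw [one_smul, one_smul, zero_add] at h1
    have h2 : g (φ.linearIsometry z) = z := LinearMap.congr_fun hg z
    rw [h1, map_add, h2]
    abel
  refine ⟨fun x => r * q (g x + -(g (φ 0))), (hq.comp g _).smul r, ?_, ?_⟩
  · intro x hx hxf
    obtain ⟨z, rfl⟩ := hφ.symm ▸ hx
    simp only [hgφ]
    rw [hq0 z (hfr ▸ ⟨hxf, hx⟩), mul_zero]
  · intro x hx hxf
    obtain ⟨z, rfl⟩ := hφ.symm ▸ hx
    simp only [hgφ]
    exact hr z hxf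

lemma quad_matrix {m : ℕ} {q : En m → ℝ} (hq : Quad q) :
    ∃ (a : Matrix (Fin m) (Fin m) ℝ) (b : Fin m → ℝ) (c : ℝ), a.IsSymm ∧
      ∀ x, q x = (∑ i, ∑ k, a i k * x i * x k) + 2 * (∑ i, b i * x i) + c := by
  obtain ⟨B, l, c, h⟩ := hq
  set e := fun i : Fin m => EuclideanSpace.single i (1 : ℝ) with he
  have hx : ∀ x : En m, x = ∑ i, x i • e i := by
    intro x
    ext j
    simp [he, Finset.sum_apply, Pi.single_apply]
  refine ⟨fun i k => (B (e i) (e k) + B (e k) (e i)) / 2, fun i => l (e i) / 2, c, ?_, fun x => ?_⟩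
  · refine Matrix.IsSymm.ext fun i k => ?_
    change (B (e k) (e i) + B (e i) (e k)) / 2 = (B (e i) (e k) + B (e k) (e i)) / 2
    rw [add_comm]
  have hB : B x x = ∑ i, ∑ k, B (e i) (e k) * x i * x k := by
    conv_lhs => rw [hx x]
    simp only [map_sum, LinearMap.sum_apply, map_smul, LinearMap.smul_apply, smul_eq_mul]
    rw [Finset.sum_comm]
    simp only [Finset.mul_sum]
    exact Finset.sum_congr rfl fun i _ => Finset.sum_congr rfl fun k _ => by ring
  have hB' : B x x = ∑ i, ∑ k, B (e k) (e i) * x i * x k := by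
    rw [hB, Finset.sum_comm]
    exact Finset.sum_congr rfl fun i _ => Finset.sum_congr rfl fun k _ => by ring
  have hl : l x = ∑ i, l (e i) * x i := by
    conv_lhs => rw [hx x]
    simp only [map_sum, map_smul, smul_eq_mul]
    exact Finset.sum_congr rfl fun i _ => by ring
  have e1 : ∑ i, ∑ k, (B (e i) (e k) + B (e k) (e i)) / 2 * x i * x k = B x x := by
    have : B x x = (B x x + B x x) / 2 := by ring
    rw [this]
    nth_rewrite 1 [hB]
    rw [hB', ← Finset.sum_add_distrib, Finset.sum_div]
    refine Finset.sum_congr rfl fun i _ => ?_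
    rw [← Finset.sum_add_distrib, Finset.sum_div]
    exact Finset.sum_congr rfl fun k _ => by ring
  have e2 : 2 * ∑ i, l (e i) / 2 * x i = l x := by
    rw [hl, Finset.mul_sum]
    exact Finset.sum_congr rfl fun i _ => by ring
  rw [e1, e2, h]

end helpers

/-- Lemma 11: under the hypotheses of Theorem 2 with K strictly convex and
regular, the frontier of K contains a nonempty relatively open piece of a real quadric
surface. -/
theorem frontier_contains_open_quadric_piece
    {n : ℕ} (hn : 3 ≤ n) (K : Set (En n)) (hKconv : Convex ℝ K) (hKcl : IsClosed K)
    (hKint : (interior K).Nonempty) (hKne : K ≠ Set.univ)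
    (hKsc : IsStrictlyConvexSet K) (hKreg : IsRegularSet K)
    (δ : sphere (0 : En n) 1 → ℝ) (hδ : Continuous δ)
    (hsec : ∀ u : sphere (0 : En n) 1,
      IsConvexQuadricIn (sphHyp δ u) (frontier K ∩ sphHyp δ u)) :
    ∃ (Q A : Set (En n)), IsRealQuadricSurface Q ∧ A.Nonempty ∧
      A ⊆ frontier K ∩ Q ∧ ∃ V : Set (En n), IsOpen V ∧ A = V ∩ frontier K := by
  have hfin : Module.finrank ℝ (En n) = n := by simp
  have hfin' : Module.finrank ℝ (En (n - 1)) = n - 1 := by simp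
  have hrank : 1 < Module.rank ℝ (En (n - 1)) := by
    rw [← Module.finrank_eq_rank, hfin']
    exact_mod_cast (by omega : 1 < n - 1)
  have hnt : Nontrivial (En (n - 1)) := Module.nontrivial_of_finrank_pos (R := ℝ) (by omega)
  -- supporting hyperplanes
  have hsup : ∀ z ∈ frontier K, ∃ v : En n, v ≠ 0 ∧ ∀ y ∈ interior K, ⟪y - z, v⟫ ≠ 0 := by
    intro z hz
    obtain ⟨G, ⟨⟨v, c, hv, rfl⟩, hzG, -, hGi⟩, -⟩ := hKreg z hz
    refine ⟨v, hv, fun y hy h => ?_⟩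
    have hzc : ⟪z, v⟫ = c := hzG
    have : y ∈ ({y : En n | ⟪y, v⟫ = c} ∩ interior K) := by
      refine ⟨?_, hy⟩
      rw [inner_sub_left, hzc, sub_eq_zero] at h
      exact h
    rw [hGi] at this
    exact this
  have hS : Supp K := fun z hz => by
    obtain ⟨v, -, hv⟩ := hsup z hz
    exact ⟨v, hv⟩
  -- bounded slices
  have hKn : K.Nonempty := hKint.mono interior_subset
  obtain ⟨x0, hx0⟩ := nonempty_frontier_iff.mpr ⟨hKn, hKne⟩
  have hx0K : x0 ∈ K := hKcl.frontier_subset hx0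
  obtain ⟨v0, hv0, hv0i⟩ := hsup x0 hx0
  have hsing : ∀ x ∈ K, ⟪x - x0, v0⟫ = 0 → x = x0 := by
    intro x hx hx'
    refine strict_single (H := Hy v0 ⟪x0, v0⟫) hKconv hKcl hKsc (convex_Hy _ _) ?_ hx ?_ hx0K rfl
    · intro y hy hyH
      exact hv0i y hy (hy_sub hyH rfl)
    · rw [inner_sub_left, sub_eq_zero] at hx'
      exact hx'
  obtain ⟨r, hr, hbdd⟩ := bdd_near hKconv hKcl hx0K hsing
  set V : Set (En n) := ball v0 (min r ‖v0‖) with hVdef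
  have hV0 : (0 : En n) ∉ V := by
    rw [hVdef, mem_ball, dist_eq_norm, zero_sub, norm_neg]
    exact fun h => absurd (lt_min_iff.mp h).2 (lt_irrefl _)
  have hVr : 0 < min r ‖v0‖ := lt_min hr (norm_pos_iff.mpr hv0)
  have hbd : ∀ v ∈ V, ∀ c, Bornology.IsBounded (K ∩ Hy v c) := fun v hv c => by
    rw [hVdef, mem_ball, dist_eq_norm] at hv
    exact hbdd v (hv.trans_le (min_le_left _ _)) c
  -- homogeneous extension
  have hsph : ∀ v : En n, v ≠ 0 → ‖v‖⁻¹ • v ∈ sphere (0 : En n) 1 := fun v hv => by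
    rw [mem_sphere_zero_iff_norm, norm_smul, norm_inv, norm_norm,
      inv_mul_cancel₀ (norm_ne_zero_iff.mpr hv)]
  set D : En n → ℝ := fun v => if h : v = 0 then 0 else ‖v‖ * δ ⟨‖v‖⁻¹ • v, hsph v h⟩ with hDdef
  have hDv : ∀ v (h : v ≠ 0), D v = ‖v‖ * δ ⟨‖v‖⁻¹ • v, hsph v h⟩ := fun v h => by
    simp only [hDdef, dif_neg h]
  have hHy : ∀ v (h : v ≠ 0), sphHyp δ ⟨‖v‖⁻¹ • v, hsph v h⟩ = Hy v (D v) := fun v h => by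
    ext x
    have hn0 := norm_ne_zero_iff.mpr h
    simp only [sphHyp, Hy, mem_ofPred_eq, hDv v h, real_inner_smul_right]
    rw [inv_mul_eq_iff_eq_mul₀ hn0]
  have hne : ∀ v ∈ V, v ≠ 0 := fun v hv h => hV0 (h ▸ hv)
  have hDc : ContinuousOn D V := by
    rw [continuousOn_iff_continuous_domRestrict]
    have : V.domRestrict D = fun v : V => ‖(v : En n)‖ * δ ⟨‖(v : En n)‖⁻¹ • (v : En n),
        hsph v (hne v v.2)⟩ := by
      ext v
      exact hDv v (hne v v.2)
    rw [this]
    refine (continuous_subtype_val.norm).mul (hδ.comp (Continuous.subtype_mk ?_ _))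
    exact (continuous_subtype_val.norm.inv₀ fun v => norm_ne_zero_iff.mpr (hne v v.2)).smul
      continuous_subtype_val
  have hinn : ∀ v ∈ V, ∃ y ∈ interior K, y ∈ Hy v (D v) := by
    intro v hv
    by_contra hcon
    push Not at hcon
    have h1 := hsec ⟨‖v‖⁻¹ • v, hsph v (hne v hv)⟩
    rw [hHy v (hne v hv)] at h1
    obtain ⟨-, φ, hφ, Q, U, hQ, hU, hUc, hfr⟩ := h1
    obtain ⟨hUo, hUn, hUu, -⟩ := comp_facts hQ hU
    refine frontier_not_subsingleton hrank hUo hUc hUn hUu ?_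
    rw [← hfr]
    intro a ha b hb
    exact φ.injective (strict_single hKconv hKcl hKsc (convex_Hy _ _) hcon
      (hKcl.frontier_subset ha.1) ha.2 (hKcl.frontier_subset hb.1) hb.2)
  have hq : ∀ v ∈ V, ∃ q, GoodQ K (Hy v (D v)) q := by
    intro v hv
    have h1 := hsec ⟨‖v‖⁻¹ • v, hsph v (hne v hv)⟩
    rw [hHy v (hne v hv)] at h1
    obtain ⟨-, φ, hφ, Q, U, hQ, hU, hUc, hfr⟩ := h1
    obtain ⟨hUo, hUn, hUu, q, hq, hqc, hq0, hq1⟩ := comp_facts hQ hU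
    exact goodQ_of hKconv (hbd v hv _) φ hφ hUc hUo hfr hq hqc hq0 hq1
  obtain ⟨Q, ⟨u, huV, hQu⟩, W, hWo, hWn, hWQ⟩ := local_thm (by omega) hKconv hKcl hS
    (convex_ball v0 _) isOpen_ball ⟨v0, mem_ball_self hVr⟩ hV0 hDc hbd hinn hq
  obtain ⟨a, b, c, hsymm, hform⟩ := quad_matrix hQu.1
  have ha : a ≠ 0 := by
    rintro rfl
    obtain ⟨y, hy, hyu⟩ := hinn u huV
    obtain ⟨d, -, hd⟩ := (dense_compl_sub (S := Submodule.span ℝ {u}) (by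
      simpa using span_pair_ne_top (by omega) u u)).inter_open_nonempty _ isOpen_univ ⟨0, trivial⟩
    obtain ⟨w, hw, hwd⟩ := exists_dual_vec _ hd
    have hwu := hw u (Submodule.subset_span (by simp))
    have hw0 : w ≠ 0 := by rintro rfl; simp at hwd
    obtain ⟨s, t, hs, ht, fs, ft⟩ := exit_hy (hbd u huV _) hy hyu hw0 hwu
    have q0 := hQu.2.2 y hyu hy
    have qs := hQu.2.1 _ (hy_line hyu hwu s) fs
    have qt := hQu.2.1 _ (hy_line hyu hwu t) ft
    have hlin : ∀ k : ℝ, Q (y + k • w) = Q y + k * (2 * ∑ i, b i * w i) := by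
      intro k
      rw [hform, hform]
      have : ∑ i, b i * (y + k • w) i = ∑ i, b i * y i + k * ∑ i, b i * w i := by
        rw [Finset.mul_sum, ← Finset.sum_add_distrib]
        refine Finset.sum_congr rfl fun i _ => ?_
        simp only [PiLp.add_apply, PiLp.smul_apply, smul_eq_mul]
        ring
      rw [this]
      simp
      ring
    rw [hlin] at qs qt
    have := quad_three (α := 0) (γ := Q y) (β := 2 * ∑ i, b i * w i) hs ht
      (by linarith [qs]) (by linarith [qt])
    linarith [this.2]
  refine ⟨{x | (∑ i, ∑ k, a i k * x i * x k) + 2 * (∑ i, b i * x i) + c = 0}, W ∩ frontier K,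
    ⟨⟨a, b, c, hsymm, ha, rfl⟩, ?_⟩, hWn, ?_, W, hWo, rfl⟩
  · obtain ⟨x, hx⟩ := hWn
    exact ⟨x, (hform x).symm.trans (hWQ x hx)⟩
  · intro x hx
    exact ⟨hx.2, (hform x).symm.trans (hWQ x hx)⟩
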